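/- Let G be a countable group, μ a symmetric probability measure on G, ‖·‖ a norm on G (i.e. ‖gh‖ ≤ ‖g‖+‖h‖, ‖g⁻¹‖ = ‖g‖, ‖e‖ = 0), w* > 0, and 𝐅 : [1,∞) → (0,∞) increasing. Assume: (i) sup_{x∈G} μ^{(n)}(x) ≤ C₁/𝐅(n) for all integers n ≥ 1; (ii) #B(x,r) ≤ C₂ 𝐅(r^{1/w*}) for all x ∈ G and r ≥ 1, where B(x,r) = {z ∈ G : ‖x⁻¹z‖ < r}; (iii) there is A ≥ 1 with 2𝐅(t) ≤ 𝐅(At) for all t ≥ 1. Then there exists a constant c such that E_x[τ_{B(x,r)}] ≤ c r^{1/w*} for all x ∈ G and all r ≥ 1, where τ_B = inf{k ≥ 0 : X_k ∉ B} is the exit time of the random walk driven by μ started at x, and E_x[τ_B] = ∑_{n≥0} P_x(τ_B > n). -/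

import Mathlib

/-!
For a ball `B = B(x,r)`, put `t = r^{1/w*}`. From any starting point, the probability of being in
`B` after `m` steps is at most `#B · sup μ^{(m)} ≤ C₁ C₂ F(t) / F(m)`, and by the doubling condition
this is at most `1/2` as soon as `m ≥ A^k t` with `2^k ≥ 2 C₁ C₂`. By the Markov property,
`P_x(τ_B > n + m) ≤ P_x(τ_B > n) / 2`, so `∑ₙ P_x(τ_B > n) ≤ 2 m`; the choice `m = ⌈A^k t⌉` gives
the bound `4 A^k t`.

The Markov property is obtained from the killed semigroup `killed μ B n y = P_y(τ_B > n)`, defined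
by conditioning on the first step: `killed_eq_walkProb` identifies it with the path sum,
`killed_le_iterate` and `iterate_step` compare it with `convPow μ n`, and `killed_add_le` is the
geometric decay.
-/

open scoped BigOperators Classical

noncomputable section

/-- A symmetric probability measure on a discrete group `G`. -/
def IsSymmProb {G : Type*} [Group G] (μ : G → ℝ) : Prop :=
  (∀ g, 0 ≤ μ g) ∧ Summable μ ∧ (∑' g, μ g) = 1 ∧ (∀ g, μ g⁻¹ = μ g)

/-- Convolution powers of `μ` : `convPow μ 0 = δ_e`, `convPow μ (n+1) = (convPow μ n) * μ`. -/
def convPow {G : Type*} [Group G] (μ : G → ℝ) : ℕ → G → ℝ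
  | 0 => fun x => if x = 1 then 1 else 0
  | n + 1 => fun x => ∑' y, convPow μ n y * μ (y⁻¹ * x)

/-- The Dirichlet form of `μ`. -/
def dirichletForm {G : Type*} [Group G] (μ : G → ℝ) (f : G → ℝ) : ℝ :=
  (1 / 2) * ∑' q : G × G, (f (q.1 * q.2) - f q.1) ^ 2 * μ q.2

/-- The spectral profile `Λ_{2,G,μ}`. -/
def spectralProfile {G : Type*} [Group G] (μ : G → ℝ) (v : ℝ) : ℝ :=
  sInf { r : ℝ | ∃ f : G → ℝ, 1 ≤ (Function.support f).ncard ∧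
    ((Function.support f).ncard : ℝ) ≤ v ∧
    r = dirichletForm μ f / ∑' x, (f x) ^ 2 }

/-- Word length with respect to a set `S` of generators. -/
def wordLength {G : Type*} [Group G] (S : Set G) (g : G) : ℕ :=
  sInf { n : ℕ | ∃ l : List G, l.length = n ∧ (∀ x ∈ l, x ∈ S) ∧ l.prod = g }

/-- `F` is regularly varying at infinity of index `γ`. -/
def RegVaryAt (F : ℝ → ℝ) (γ : ℝ) : Prop :=
  ∀ l : ℝ, 0 < l →
    Filter.Tendsto (fun t => F (l * t) / F t) Filter.atTop (nhds (l ^ γ))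

/-- `G` is finitely generated of polynomial volume growth. -/
def HasPolyGrowth (G : Type*) [Group G] : Prop :=
  ∃ (S : Finset G) (D c C : ℝ), (∀ s ∈ S, s⁻¹ ∈ S) ∧
    Subgroup.closure (S : Set G) = ⊤ ∧ 0 < c ∧ c ≤ C ∧
    ∀ r : ℝ, 1 ≤ r →
      c * r ^ D ≤ (({g : G | (wordLength (S : Set G) g : ℝ) ≤ r}).ncard : ℝ) ∧
      (({g : G | (wordLength (S : Set G) g : ℝ) ≤ r}).ncard : ℝ) ≤ C * r ^ D

/-- A norm on the group `G`. -/
def IsGroupNorm {G : Type*} [Group G] (N : G → ℝ) : Prop :=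
  (∀ g, 0 ≤ N g) ∧ N 1 = 0 ∧ (∀ g, N g⁻¹ = N g) ∧ ∀ g h, N (g * h) ≤ N g + N h

/-- A quasi-norm on the group `G`, with quasi-triangle constant `A`. -/
def IsQuasiNorm {G : Type*} [Group G] (N : G → ℝ) (A : ℝ) : Prop :=
  1 ≤ A ∧ (∀ g, 0 ≤ N g) ∧ N 1 = 0 ∧ (∀ g, N g⁻¹ = N g) ∧
    ∀ g h, N (g * h) ≤ A * (N g + N h)

/-- `f ⪯ g` in a neighborhood of infinity. -/
def Preceq (f g : ℝ → ℝ) : Prop :=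
  ∃ c₁ c₂ M : ℝ, 0 < c₁ ∧ 0 < c₂ ∧ ∀ x, M ≤ x → f x ≤ c₁ * g (c₂ * x)

/-- `Φ(t) = t²/∫₀ᵗ 2s/φ(s) ds` for `t ≥ 1`, extended linearly on `[0,1]` with `Φ(0)=0`. -/
def PhiOf (φ : ℝ → ℝ) (t : ℝ) : ℝ :=
  if 1 ≤ t then t ^ 2 / (intervalIntegral (fun s => 2 * s / φ s) 0 t MeasureTheory.volume)
  else t * (1 / (intervalIntegral (fun s => 2 * s / φ s) 0 1 MeasureTheory.volume))

/-- Generalized right-continuous inverse `F⁻¹(v) = inf {t ≥ 1 : F(t) ≥ v}`. -/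
def Finv (F : ℝ → ℝ) (v : ℝ) : ℝ := sInf { t : ℝ | 1 ≤ t ∧ v ≤ F t }

/-- The set of products of exactly `Q` elements of `U`. -/
def prodSet {G : Type*} [Group G] (Q : ℕ) (U : Set G) : Set G :=
  { g | ∃ l : List G, l.length = Q ∧ (∀ x ∈ l, x ∈ U) ∧ l.prod = g }

/-- The trajectory of the walk started at `x` with steps `ω` : `X_k = x·ω₁⋯ω_k`. -/
def walkPath {G : Type*} [Group G] (x : G) {n : ℕ} (ω : Fin n → G) (k : ℕ) : G :=
  x * ((List.ofFn ω).take k).prod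

/-- The probability that the `n`-step random walk driven by `μ` started at `x`
has a trajectory satisfying `E`. -/
def walkProb {G : Type*} [Group G] (μ : G → ℝ) (x : G) (n : ℕ)
    (E : (ℕ → G) → Prop) : ℝ :=
  ∑' ω : Fin n → G,
    Set.indicator {ω : Fin n → G | E (walkPath x ω)} (fun ω => ∏ j, μ (ω j)) ω

/-! ### The killed semigroup and its geometric decay -/

/-- The transition operator of the walk on functions: `(step μ f)(y) = E_y[f(X₁)]`. -/
def step {G : Type*} [Group G] (μ : G → ℝ) (f : G → ℝ) (y : G) : ℝ :=
  ∑' g, μ g * f (y * g)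

/-- The survival probability `P_y(τ_B > n)`, defined by conditioning on the first step. -/
def killed {G : Type*} [Group G] (μ : G → ℝ) (B : Set G) : ℕ → G → ℝ
  | 0 => B.indicator 1
  | n + 1 => B.indicator (step μ (killed μ B n))

section ExitTime

variable {G : Type*} [Group G] {μ : G → ℝ}

lemma summable_step (hμ : IsSymmProb μ) {f : G → ℝ} (h0 : ∀ y, 0 ≤ f y) (h1 : ∀ y, f y ≤ 1)
    (y : G) : Summable fun g => μ g * f (y * g) :=
  Summable.of_nonneg_of_le (fun g => mul_nonneg (hμ.1 g) (h0 _))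
    (fun g => mul_le_of_le_one_right (hμ.1 g) (h1 _)) hμ.2.1

lemma step_nonneg (hμ : IsSymmProb μ) {f : G → ℝ} (h0 : ∀ y, 0 ≤ f y) (y : G) :
    0 ≤ step μ f y :=
  tsum_nonneg fun g => mul_nonneg (hμ.1 g) (h0 _)

lemma step_le_one (hμ : IsSymmProb μ) {f : G → ℝ} (h0 : ∀ y, 0 ≤ f y) (h1 : ∀ y, f y ≤ 1)
    (y : G) : step μ f y ≤ 1 := by
  rw [← hμ.2.2.1]
  exact (summable_step hμ h0 h1 y).tsum_le_tsum
    (fun g => mul_le_of_le_one_right (hμ.1 g) (h1 _)) hμ.2.1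

lemma step_le_mul_step (hμ : IsSymmProb μ) {f h : G → ℝ} (f0 : ∀ y, 0 ≤ f y) (f1 : ∀ y, f y ≤ 1)
    (h0 : ∀ y, 0 ≤ h y) (h1 : ∀ y, h y ≤ 1) {a : ℝ} (hfh : ∀ y, f y ≤ a * h y) (y : G) :
    step μ f y ≤ a * step μ h y := by
  unfold step
  rw [← tsum_mul_left]
  refine (summable_step hμ f0 f1 y).tsum_le_tsum (fun g => ?_)
    ((summable_step hμ h0 h1 y).mul_left a)
  nlinarith [mul_le_mul_of_nonneg_left (hfh (y * g)) (hμ.1 g)]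

lemma killed_nonneg (hμ : IsSymmProb μ) (B : Set G) (n : ℕ) (y : G) : 0 ≤ killed μ B n y := by
  induction n generalizing y with
  | zero => exact Set.indicator_nonneg (fun _ _ => zero_le_one) y
  | succ n ih => exact Set.indicator_nonneg (fun z _ => step_nonneg hμ ih z) y

lemma killed_le_one (hμ : IsSymmProb μ) (B : Set G) (n : ℕ) (y : G) : killed μ B n y ≤ 1 := by
  induction n generalizing y with
  | zero => exact Set.indicator_le' (fun _ _ => le_rfl) (fun _ _ => zero_le_one) y
  | succ n ih =>
    exact Set.indicator_le' (g := fun _ => (1 : ℝ))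
      (fun z _ => step_le_one hμ (killed_nonneg hμ B n) ih z) (fun _ _ => zero_le_one) y

lemma killed_of_notMem (B : Set G) (n : ℕ) {y : G} (hy : y ∉ B) : killed μ B n y = 0 := by
  cases n <;> simp [killed, hy]

lemma iterate_step_mem (hμ : IsSymmProb μ) (n : ℕ) {f : G → ℝ} (h0 : ∀ y, 0 ≤ f y)
    (h1 : ∀ y, f y ≤ 1) (y : G) : 0 ≤ (step μ)^[n] f y ∧ (step μ)^[n] f y ≤ 1 := by
  induction n generalizing f y with
  | zero => exact ⟨h0 y, h1 y⟩
  | succ n ih => exact ih (step_nonneg hμ h0) (step_le_one hμ h0 h1) y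

/-- Surviving up to time `n` forces the walk to be in `B` at time `n`. -/
lemma killed_le_iterate (hμ : IsSymmProb μ) (B : Set G) (n : ℕ) (y : G) :
    killed μ B n y ≤ (step μ)^[n] (B.indicator 1) y := by
  have i0 : ∀ y, 0 ≤ B.indicator (1 : G → ℝ) y := Set.indicator_nonneg (fun _ _ => zero_le_one)
  have i1 : ∀ y, B.indicator (1 : G → ℝ) y ≤ 1 := killed_le_one hμ B 0
  induction n generalizing y with
  | zero => exact le_rfl
  | succ n ih =>
    rw [Function.iterate_succ_apply']
    have hs := step_le_mul_step hμ (killed_nonneg hμ B n) (killed_le_one hμ B n)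
      (fun y => (iterate_step_mem hμ n i0 i1 y).1) (fun y => (iterate_step_mem hμ n i0 i1 y).2)
      (a := 1) (fun y => by rw [one_mul]; exact ih y) y
    rw [one_mul] at hs
    exact (Set.indicator_le_self' (fun z _ => step_nonneg hμ (killed_nonneg hμ B n) z) y).trans hs

/-- If survival up to time `m` has probability at most `a` from every starting point, then each
further `m` steps cost a factor `a`. -/
lemma killed_add_le (hμ : IsSymmProb μ) (B : Set G) {m : ℕ} {a : ℝ}
    (hm : ∀ y, killed μ B m y ≤ a) (n : ℕ) (y : G) :
    killed μ B (n + m) y ≤ a * killed μ B n y := by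
  induction n generalizing y with
  | zero =>
    by_cases hy : y ∈ B
    · simpa [killed, hy] using hm y
    · simp [killed_of_notMem _ _ hy]
  | succ n ih =>
    by_cases hy : y ∈ B
    · rw [Nat.add_right_comm]
      simpa [killed, hy] using step_le_mul_step hμ (killed_nonneg hμ B _) (killed_le_one hμ B _)
        (killed_nonneg hμ B _) (killed_le_one hμ B _) ih y
    · simp [killed_of_notMem _ _ hy]

/-! ### Convolution powers as iterates of the transition operator -/

lemma summable_mul_shear {c : G → ℝ} (hμ : IsSymmProb μ) (c0 : ∀ y, 0 ≤ c y)
    (hc : Summable c) : Summable fun q : G × G => c q.1 * μ (q.1⁻¹ * q.2) :=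
  ((Equiv.prodShear (Equiv.refl G) fun z => Equiv.mulLeft z⁻¹).summable_iff
    (f := fun q : G × G => c q.1 * μ q.2)).2 (hc.mul_of_nonneg hμ.2.1 c0 hμ.1)

lemma convPow_nonneg (hμ : IsSymmProb μ) (n : ℕ) (y : G) : 0 ≤ convPow μ n y := by
  induction n generalizing y with
  | zero => unfold convPow; split_ifs <;> norm_num
  | succ n ih => exact tsum_nonneg fun z => mul_nonneg (ih z) (hμ.1 _)

lemma summable_convPow (hμ : IsSymmProb μ) (n : ℕ) : Summable (convPow μ n) := by
  induction n with
  | zero =>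
    exact summable_of_ne_finset_zero (s := {1}) fun b hb => by
      simp only [Finset.mem_singleton] at hb
      simp [convPow, hb]
  | succ n ih =>
    exact ((summable_mul_shear hμ (convPow_nonneg hμ n) ih).prod_symm).prod

/-- `E_y[f(X_n)]` is the integral of `f` against the translated convolution power. -/
lemma iterate_step (hμ : IsSymmProb μ) (n : ℕ) {f : G → ℝ} (h0 : ∀ y, 0 ≤ f y)
    (h1 : ∀ y, f y ≤ 1) (y : G) :
    (step μ)^[n] f y = ∑' z, convPow μ n z * f (y * z) := by
  induction n generalizing f y with
  | zero =>
    rw [tsum_eq_single 1 fun z hz => by simp [convPow, hz]]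
    simp [convPow]
  | succ n ih =>
    rw [Function.iterate_succ_apply, ih (step_nonneg hμ h0) (step_le_one hμ h0 h1)]
    have hs : Summable (Function.uncurry fun z x : G =>
        convPow μ n z * μ (z⁻¹ * x) * f (y * x)) :=
      Summable.of_nonneg_of_le
        (fun q => mul_nonneg (mul_nonneg (convPow_nonneg hμ n _) (hμ.1 _)) (h0 _))
        (fun q => mul_le_of_le_one_right (mul_nonneg (convPow_nonneg hμ n _) (hμ.1 _)) (h1 _))
        (summable_mul_shear hμ (convPow_nonneg hμ n) (summable_convPow hμ n))
    calc ∑' z, convPow μ n z * step μ f (y * z)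
        = ∑' z, ∑' x, convPow μ n z * μ (z⁻¹ * x) * f (y * x) := by
          refine tsum_congr fun z => ?_
          unfold step
          rw [← tsum_mul_left, ← (Equiv.mulLeft z⁻¹).tsum_eq]
          refine tsum_congr fun x => ?_
          simp [mul_assoc]
      _ = ∑' x, ∑' z, convPow μ n z * μ (z⁻¹ * x) * f (y * x) := hs.tsum_comm.symm
      _ = _ := tsum_congr fun x => by rw [tsum_mul_right]; rfl

/-- A uniform bound on `μ^{(n)}` bounds the probability of being in the finite set `B`. -/
lemma killed_le_ncard_mul (hμ : IsSymmProb μ) {B : Set G} (hB : B.Finite) (n : ℕ) {D : ℝ}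
    (hD : ∀ z, convPow μ n z ≤ D) (y : G) : killed μ B n y ≤ B.ncard * D := by
  refine (killed_le_iterate hμ B n y).trans ?_
  rw [iterate_step hμ n (f := B.indicator 1) (killed_nonneg hμ B 0) (killed_le_one hμ B 0),
    ← (Equiv.mulLeft y⁻¹).tsum_eq,
    tsum_eq_sum (s := hB.toFinset) fun z hz => by
      have : z ∉ B := by simpa using hz
      simp [this],
    Set.ncard_eq_toFinset_card B hB, ← nsmul_eq_mul]
  refine Finset.sum_le_card_nsmul _ _ _ fun z hz => ?_
  have : z ∈ B := by simpa using hz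
  simpa [this] using hD (y⁻¹ * z)

/-! ### Path sums and the killed semigroup -/

lemma summable_prod_steps (hμ : IsSymmProb μ) (n : ℕ) :
    Summable fun ω : Fin n → G => ∏ j, μ (ω j) := by
  induction n with
  | zero => exact (hasSum_fintype _).summable
  | succ n ih =>
    rw [← (Fin.consEquiv fun _ : Fin (n + 1) => G).summable_iff]
    refine (hμ.2.1.mul_of_nonneg ih hμ.1 fun ω => Finset.prod_nonneg fun j _ => hμ.1 _).congr ?_
    intro q
    simp [Fin.consEquiv, Fin.prod_univ_succ]

lemma walkPath_zero (x : G) {n : ℕ} (ω : Fin n → G) : walkPath x ω 0 = x := by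
  simp [walkPath]

lemma walkPath_cons_succ (x g : G) {n : ℕ} (ω : Fin n → G) (k : ℕ) :
    walkPath x (Fin.cons g ω : Fin (n + 1) → G) (k + 1) = walkPath (x * g) ω k := by
  simp [walkPath, List.ofFn_succ, mul_assoc]

lemma killed_eq_walkProb (hμ : IsSymmProb μ) (B : Set G) (n : ℕ) (y : G) :
    walkProb μ y n (fun X => ∀ k ≤ n, X k ∈ B) = killed μ B n y := by
  induction n generalizing y with
  | zero =>
    unfold walkProb
    rw [tsum_fintype]
    by_cases hy : y ∈ B <;> simp [walkPath_zero, killed, hy]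
  | succ n ih =>
    by_cases hy : y ∈ B
    swap
    · rw [killed_of_notMem _ _ hy]
      unfold walkProb
      rw [← tsum_zero (α := ℝ) (β := Fin (n + 1) → G)]
      refine tsum_congr fun ω => Set.indicator_of_notMem (fun h => hy ?_) _
      simpa [walkPath_zero] using h 0 (Nat.zero_le _)
    · have hs := (summable_prod_steps hμ (n + 1)).indicator
        {ω : Fin (n + 1) → G | ∀ k ≤ n + 1, walkPath y ω k ∈ B}
      rw [← (Fin.consEquiv fun _ : Fin (n + 1) => G).summable_iff] at hs
      unfold walkProb
      rw [← (Fin.consEquiv fun _ : Fin (n + 1) => G).tsum_eq]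
      refine hs.tsum_prod.trans ?_
      simp only [killed, Set.indicator_of_mem hy, step]
      refine tsum_congr fun g => ?_
      rw [← ih, walkProb, ← tsum_mul_left]
      refine tsum_congr fun ω => ?_
      have hiff : (∀ k ≤ n + 1, walkPath y (Fin.cons g ω : Fin (n + 1) → G) k ∈ B) ↔
          ∀ k ≤ n, walkPath (y * g) ω k ∈ B := by
        refine ⟨fun h k hk => ?_, fun h k hk => ?_⟩
        · rw [← walkPath_cons_succ]
          exact h _ (by omega)
        · cases k with
          | zero => rwa [walkPath_zero]
          | succ k => rw [walkPath_cons_succ]; exact h k (by omega)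
      by_cases h : ∀ k ≤ n, walkPath (y * g) ω k ∈ B
      · have h' := hiff.2 h
        simp only [Function.comp_apply]
        rw [Set.indicator_of_mem (by exact h'), Set.indicator_of_mem (by exact h),
          Fin.prod_univ_succ]
        simp
      · have h' := fun h' => h (hiff.1 h')
        simp only [Function.comp_apply]
        rw [Set.indicator_of_notMem (by exact h'), Set.indicator_of_notMem (by exact h), mul_zero]

end ExitTime

/-! ### Halving sequences and the doubling condition -/

/-- A sequence in `[0,1]` that halves every `m` steps has sum at most `2 m`. -/
lemma summable_and_tsum_le_of_halving {u : ℕ → ℝ} (h0 : ∀ n, 0 ≤ u n) (h1 : ∀ n, u n ≤ 1) {m : ℕ}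
    (hm : ∀ n, u (n + m) ≤ 1 / 2 * u n) : Summable u ∧ ∑' n, u n ≤ 2 * m := by
  have key : ∀ K, ∑ n ∈ Finset.range K, u n ≤ 2 * m := by
    intro K
    have e1 : ∑ n ∈ Finset.range K, u n ≤ ∑ n ∈ Finset.range (m + K), u n :=
      Finset.sum_le_sum_of_subset_of_nonneg (Finset.range_mono (by omega)) fun n _ _ => h0 n
    rw [Finset.sum_range_add] at e1
    have e2 : ∑ n ∈ Finset.range m, u n ≤ m := by
      simpa using Finset.sum_le_card_nsmul (Finset.range m) u 1 fun n _ => h1 n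
    have e3 : ∑ n ∈ Finset.range K, u (m + n) ≤ 1 / 2 * ∑ n ∈ Finset.range K, u n := by
      rw [Finset.mul_sum]
      exact Finset.sum_le_sum fun n _ => by rw [add_comm]; exact hm n
    linarith
  exact ⟨summable_of_sum_range_le h0 key, Real.tsum_le_of_sum_range_le h0 key⟩

lemma two_pow_mul_le_of_doubling {F : ℝ → ℝ} {A : ℝ} (hA : 1 ≤ A)
    (hF : ∀ t : ℝ, 1 ≤ t → 2 * F t ≤ F (A * t)) (k : ℕ) {t : ℝ} (ht : 1 ≤ t) :
    2 ^ k * F t ≤ F (A ^ k * t) := by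
  induction k with
  | zero => simp
  | succ k ih =>
    have := hF (A ^ k * t) (one_le_mul_of_one_le_of_one_le (one_le_pow₀ hA) ht)
    rw [pow_succ' A, mul_assoc, pow_succ' (2 : ℝ)]
    linarith

/-! ### The exit time bound -/

/-- the expected exit time from a ball of radius `r` is at most
`c r^{1/w*}`. -/
theorem stmt10 {G : Type*} [Group G] [Countable G]
    (μ : G → ℝ) (hμ : IsSymmProb μ)
    (N : G → ℝ) (hN : IsGroupNorm N)
    (wstar : ℝ) (hw : 0 < wstar)
    (F : ℝ → ℝ) (hFmono : MonotoneOn F (Set.Ici 1))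
    (hFpos : ∀ t : ℝ, 1 ≤ t → 0 < F t)
    (C₁ : ℝ) (hC₁ : 0 < C₁)
    (hup : ∀ n : ℕ, 1 ≤ n → ∀ x : G, convPow μ n x ≤ C₁ / F n)
    (C₂ : ℝ) (hC₂ : 0 < C₂)
    (hball : ∀ x : G, ∀ r : ℝ, 1 ≤ r → {z : G | N (x⁻¹ * z) < r}.Finite ∧
      (({z : G | N (x⁻¹ * z) < r}).ncard : ℝ) ≤ C₂ * F (r ^ (1 / wstar)))
    (A : ℝ) (hA : 1 ≤ A) (hFdbl : ∀ t : ℝ, 1 ≤ t → 2 * F t ≤ F (A * t)) :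
    ∃ c : ℝ, ∀ x : G, ∀ r : ℝ, 1 ≤ r →
      Summable (fun n : ℕ =>
        walkProb μ x n (fun X => ∀ k ≤ n, X k ∈ {z : G | N (x⁻¹ * z) < r})) ∧
      (∑' n : ℕ,
        walkProb μ x n (fun X => ∀ k ≤ n, X k ∈ {z : G | N (x⁻¹ * z) < r})) ≤
        c * r ^ (1 / wstar) := by
  obtain ⟨k, hk⟩ := pow_unbounded_of_one_lt (2 * (C₁ * C₂)) (one_lt_two : (1 : ℝ) < 2)
  refine ⟨4 * A ^ k, fun x r hr => ?_⟩
  obtain ⟨hfin, hcard⟩ := hball x r hr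
  simp only [killed_eq_walkProb hμ]
  set B := {z : G | N (x⁻¹ * z) < r}
  set t := r ^ (1 / wstar)
  have ht : 1 ≤ t := Real.one_le_rpow hr (by positivity)
  have hs : 1 ≤ A ^ k * t := one_le_mul_of_one_le_of_one_le (one_le_pow₀ hA) ht
  set m := ⌈A ^ k * t⌉₊
  have hsm : A ^ k * t ≤ m := Nat.le_ceil _
  have hm1 : (1 : ℝ) ≤ m := hs.trans hsm
  have hFm : 2 ^ k * F t ≤ F m :=
    (two_pow_mul_le_of_doubling hA hFdbl k ht).trans (hFmono hs hm1 hsm)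
  have hFm0 : 0 < F m := hFpos _ hm1
  have half : ∀ y, killed μ B m y ≤ 1 / 2 := fun y => by
    refine (killed_le_ncard_mul hμ hfin m (hup m (by exact_mod_cast hm1)) y).trans ?_
    refine (mul_le_mul_of_nonneg_right hcard (by positivity)).trans ?_
    rw [← mul_div_assoc, div_le_iff₀ hFm0]
    nlinarith [mul_le_mul_of_nonneg_right hk.le (hFpos t ht).le]
  obtain ⟨hsum, hle⟩ := summable_and_tsum_le_of_halving (fun n => killed_nonneg hμ B n x)
    (fun n => killed_le_one hμ B n x) (fun n => killed_add_le hμ B half n x)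
  have hmlt : (m : ℝ) < A ^ k * t + 1 := Nat.ceil_lt_add_one (by linarith)
  exact ⟨hsum, by linarith⟩
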